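/- Let ε, T > 0 and define δ(ε, T) := min{ε/2, ε³/(240 T⁵)}. Let Γ ∈ ℝ^{p×p} be a connected interconnection, r ∈ ℝ^p satisfy r^T Γ = 0 and r^T 1 = 1, and Ω ∈ ℝ^{p×p} be symmetric positive definite with (Γ − 1 r^T)^T Ω + Ω (Γ − 1 r^T) = −I_p. Define ρ(Γ) := σ_max(Ω) · max{1, |Γ|³} and V(x) := x^T (Ω ⊗ I_n) x. Then for every Q : ℝ≥0 → Q̄_n (Riemann-integrable) with σ_min(∫₀^T Q_t dt) ≥ ε, every solution x of ẋ(t) = (Γ ⊗ Q_t) x(t) satisfies V(x(T) − x̄) ≤ (1 − δ(ε,T)/ρ(Γ)) · V(x(0) − x̄), where x̄ := (1 r^T ⊗ I_n) x(0). -/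

import Mathlib

open Matrix MeasureTheory Filter
open scoped Kronecker

noncomputable section

/-- Euclidean norm of a vector. -/
def eunorm {ι : Type*} [Fintype ι] (v : ι → ℝ) : ℝ := Real.sqrt (∑ i, v i ^ 2)

/-- Spectral (induced 2-) norm of a matrix. -/
def specNorm {m n : Type*} [Fintype m] [Fintype n] (M : Matrix m n ℝ) : ℝ :=
  sSup {c : ℝ | ∃ v : n → ℝ, eunorm v ≤ 1 ∧ c = eunorm (M.mulVec v)}

/-- Smallest singular value of a matrix. -/
def sigmaMin {m n : Type*} [Fintype m] [Fintype n] (M : Matrix m n ℝ) : ℝ :=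
  sInf {c : ℝ | ∃ v : n → ℝ, eunorm v = 1 ∧ c = eunorm (M.mulVec v)}

/-- Largest singular value of a matrix. -/
def sigmaMax {m n : Type*} [Fintype m] [Fintype n] (M : Matrix m n ℝ) : ℝ :=
  sSup {c : ℝ | ∃ v : n → ℝ, eunorm v = 1 ∧ c = eunorm (M.mulVec v)}

/-- A continuous-time interconnection matrix. -/
def IsInterconnection {p : ℕ} (Γ : Matrix (Fin p) (Fin p) ℝ) : Prop :=
  (∀ i j, i ≠ j → 0 ≤ Γ i j) ∧
  ∀ i, Γ i i = -∑ j ∈ Finset.univ.filter (fun j => j ≠ i), Γ i j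

/-- Connectedness of the graph of a matrix. -/
def ConnectedMat {p : ℕ} (Γ : Matrix (Fin p) (Fin p) ℝ) : Prop :=
  ∃ v : Fin p, ∀ u : Fin p, Relation.ReflTransGen (fun i j => 0 < Γ i j) u v

/-- Membership in `Q̄_n`: symmetric positive semidefinite with spectral norm at most 1. -/
def InQbar {n : ℕ} (R : Matrix (Fin n) (Fin n) ℝ) : Prop :=
  R.PosSemidef ∧ specNorm R ≤ 1

/-- `δ(ε, T) = min{ε/2, ε³/(240 T⁵)}`. -/
def deltaCT (ε T : ℝ) : ℝ := min (ε / 2) (ε ^ 3 / (240 * T ^ 5))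

/-- Sufficient excitation for `Q : ℝ≥0 → Q_n`. -/
def SuffExcitingCT {n : ℕ} (Q : ℝ → Matrix (Fin n) (Fin n) ℝ) : Prop :=
  ∃ ε T : ℕ → ℝ, (∀ i, 0 < ε i) ∧ (∀ i, 0 < T i) ∧
    (∀ i, ε i ≤ sigmaMin (Matrix.of fun a b =>
      ∫ t in (∑ j ∈ Finset.range i, T j)..((∑ j ∈ Finset.range i, T j) + T i), Q t a b)) ∧
    Tendsto (fun N => ∑ i ∈ Finset.range N, deltaCT (ε i) (T i)) atTop atTop

/-- Persistence of excitation for `Q : ℝ≥0 → Q_n`. -/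
def PersExcitingCT {n : ℕ} (Q : ℝ → Matrix (Fin n) (Fin n) ℝ) : Prop :=
  ∃ ε T : ℝ, 0 < ε ∧ 0 < T ∧ ∀ t : ℝ, 0 ≤ t →
    ε ≤ sigmaMin (Matrix.of fun a b => ∫ s in t..(t + T), Q s a b)

/-!
Write `V` for the Lyapunov function along the deviation `z = x - x̄`. Since the average is conserved
and `Ω` solves the Lyapunov equation of `Γ - 1 rᵀ`, `V` decays at the rate `⟪z, A z⟫`, where
`A t = I ⊗ Q t` is a positive contraction. The speed `‖z'‖ ≤ |Γ| ‖A z‖` satisfies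
`‖z'‖² ≤ |Γ|² ⟪z, A z⟫`, so by Cauchy–Schwarz a small total decay of `V` keeps `z` close to `z 0`.
Then `∫ ⟪z 0, A z 0⟫`, which excitation bounds below by `ε ‖z 0‖²`, is controlled by that decay, so
the decay is at least a fixed proportion of `‖z 0‖²`, hence of `V (z 0)`.
-/

open Set
open scoped RealInnerProductSpace

section Displacement

variable {E : Type*} [NormedAddCommGroup E] [NormedSpace ℝ E]

theorem sq_norm_sub_le_mul_sub {z z' : ℝ → E} {F F' : ℝ → ℝ} {a b : ℝ} (hab : a ≤ b)
    (hz : ∀ t ∈ Icc a b, HasDerivWithinAt z (z' t) (Icc a b) t)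
    (hF : ∀ t ∈ Icc a b, HasDerivWithinAt F (F' t) (Icc a b) t)
    (hzF : ∀ t ∈ Icc a b, ‖z' t‖ ^ 2 ≤ F' t) :
    ‖z b - z a‖ ^ 2 ≤ (b - a) * (F b - F a) := by
  -- `2 c ‖z'‖ ≤ F' + c²` for every `c`; integrated, it is a nonnegative quadratic in `c`.
  have hquad (c : ℝ) : 2 * c * ‖z b - z a‖ ≤ F b - F a + (b - a) * c ^ 2 := by
    have hf (t) (ht : t ∈ Icc a b) : HasDerivWithinAt (fun s => (2 * c) • (z s - z a))
        ((2 * c) • z' t) (Icc a b) t := ((hz t ht).sub_const _).const_smul _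
    have hB (t) (ht : t ∈ Icc a b) : HasDerivWithinAt (fun s => F s - F a + (s - a) * c ^ 2)
        (F' t + c ^ 2) (Icc a b) t := by
      refine (((hF t ht).sub_const (F a)).add
        (((hasDerivWithinAt_id t _).sub_const a).mul_const (c ^ 2))).congr_deriv ?_
      rw [one_mul]
    have hspeed (t) (ht : t ∈ Icc a b) : ‖(2 * c) • z' t‖ ≤ F' t + c ^ 2 := by
      rw [norm_smul, Real.norm_eq_abs, abs_mul, abs_two]
      linarith [hzF t ht, sq_nonneg (|c| - ‖z' t‖), sq_abs c]
    have hnorm := image_norm_le_of_norm_deriv_right_le_deriv_boundary'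
      (fun t ht => (hf t ht).continuousWithinAt)
      (fun t ht => (hf t (Ico_subset_Icc_self ht)).mono_of_mem_nhdsWithin
        (Icc_mem_nhdsGE_of_mem ht))
      (by simp) (fun t ht => (hB t ht).continuousWithinAt)
      (fun t ht => (hB t (Ico_subset_Icc_self ht)).mono_of_mem_nhdsWithin
        (Icc_mem_nhdsGE_of_mem ht))
      (fun t ht => hspeed t (Ico_subset_Icc_self ht)) (right_mem_Icc.2 hab)
    rw [norm_smul, Real.norm_eq_abs] at hnorm
    exact (mul_le_mul_of_nonneg_right (le_abs_self _) (norm_nonneg _)).trans hnorm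
  have hdiscrim := discrim_le_zero (a := b - a) (b := -(2 * ‖z b - z a‖)) (c := F b - F a)
    fun c => by linarith [hquad c]
  rw [discrim] at hdiscrim
  linarith

theorem eq_left_of_hasDerivWithinAt_zero {y : ℝ → E} {a b : ℝ}
    (hy : ∀ t ∈ Icc a b, HasDerivWithinAt y 0 (Icc a b) t) {t : ℝ} (ht : t ∈ Icc a b) :
    y t = y a :=
  constant_of_has_deriv_right_zero (fun s hs => (hy s hs).continuousWithinAt)
    (fun s hs => (hy s (Ico_subset_Icc_self hs)).mono_of_mem_nhdsWithin
      (Icc_mem_nhdsGE_of_mem hs)) t ht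

end Displacement

section Contraction

variable {E : Type*} [NormedAddCommGroup E] [InnerProductSpace ℝ E] {A : E →L[ℝ] E}

theorem inner_apply_self_le_mul_sq_norm {c : ℝ} (hA : ‖A‖ ≤ c) (v : E) :
    ⟪v, A v⟫ ≤ c * ‖v‖ ^ 2 :=
  calc ⟪v, A v⟫ ≤ ‖v‖ * ‖A v‖ := real_inner_le_norm v (A v)
    _ ≤ ‖v‖ * (c * ‖v‖) := by gcongr; exact A.le_of_opNorm_le hA v
    _ = c * ‖v‖ ^ 2 := by ring

theorem sq_norm_apply_le_inner (hA : A.IsPositive) (hA1 : ‖A‖ ≤ 1) (v : E) :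
    ‖A v‖ ^ 2 ≤ ⟪v, A v⟫ := by
  have hpos := hA.inner_nonneg_right (v - A v)
  have hcontr := inner_apply_self_le_mul_sq_norm hA1 (A v)
  have hsymm : ⟪A v, A v⟫ = ⟪v, A (A v)⟫ := hA.isSymmetric v (A v)
  rw [map_sub, inner_sub_left, inner_sub_right, inner_sub_right] at hpos
  rw [← real_inner_self_eq_norm_sq] at hcontr ⊢
  linarith

theorem inner_apply_self_le_add (hA : A.IsPositive) (hA1 : ‖A‖ ≤ 1) (v w : E) :
    ⟪v, A v⟫ ≤ 3 / 2 * ⟪w, A w⟫ + 3 * ‖w - v‖ ^ 2 := by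
  -- Young's inequality for the form of `A`: expand the nonnegative form at `3 w - 2 v`.
  have hpos := hA.inner_nonneg_right ((3 : ℝ) • w - (2 : ℝ) • v)
  have hcontr := inner_apply_self_le_mul_sq_norm hA1 (w - v)
  simp only [map_sub, map_smul, inner_sub_left, inner_sub_right, real_inner_smul_left,
    real_inner_smul_right, one_mul] at hpos hcontr
  linarith

theorem inner_apply_add_inner_apply_eq_neg [CompleteSpace E] {G S : E →L[ℝ] E}
    (hGS : star G * S + S * G = -1) (hA : IsSelfAdjoint A) (hAG : Commute A G)
    (hAS : Commute A S) (v : E) : ⟪v, S (A (G v))⟫ + ⟪A (G v), S v⟫ = -⟪v, A v⟫ := by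
  have hleft : S * (A * G) = S * G * A := by rw [hAG.eq, mul_assoc]
  have hright : star (A * G) * S = star G * S * A := by
    rw [star_mul, hA.star_eq, mul_assoc, hAS.eq, mul_assoc]
  calc ⟪v, S (A (G v))⟫ + ⟪A (G v), S v⟫ = ⟪v, (S * (A * G) + star (A * G) * S) v⟫ := by
        rw [_root_.add_apply, inner_add_right]
        congr 1
        exact (ContinuousLinearMap.adjoint_inner_right (A * G) v (S v)).symm
    _ = -⟪v, A v⟫ := by
        rw [hleft, hright, ← add_mul, add_comm, hGS, neg_one_mul, _root_.neg_apply,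
          inner_neg_right]

end Contraction

section Rate

theorem deltaCT_nonneg {ε T : ℝ} (hε : 0 ≤ ε) (hT : 0 ≤ T) : 0 ≤ deltaCT ε T :=
  le_min (by positivity) (by positivity)

theorem one_le_max_one_cube {g : ℝ} : 1 ≤ max 1 (g ^ 3) := le_max_left _ _

theorem sq_le_max_one_cube {g : ℝ} (hg : 0 ≤ g) : g ^ 2 ≤ max 1 (g ^ 3) := by
  rcases le_total g 1 with h | h
  · exact (pow_le_one₀ hg h).trans (le_max_left _ _)
  · exact (pow_le_pow_right₀ h (by norm_num)).trans (le_max_right _ _)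

theorem deltaCT_mul_one_add_sq_le {ε T : ℝ} (hε : 0 ≤ ε) (hT : 0 < T) (hεT : ε ≤ T) :
    deltaCT ε T * (3 / 2 * (1 + T ^ 2)) ≤ ε := by
  rcases le_total (3 * T ^ 2) 1 with hsmall | hlarge
  · calc deltaCT ε T * (3 / 2 * (1 + T ^ 2)) ≤ ε / 2 * 2 :=
        mul_le_mul (min_le_left _ _) (by linarith) (by positivity) (by positivity)
      _ = ε := by ring
  · have hT2 : 1 / 2 ≤ T := by nlinarith
    have hδ : deltaCT ε T ≤ ε / (240 * T ^ 3) :=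
      calc deltaCT ε T ≤ ε ^ 3 / (240 * T ^ 5) := min_le_right _ _
        _ = ε * ε ^ 2 / (240 * T ^ 5) := by ring
        _ ≤ ε * T ^ 2 / (240 * T ^ 5) := by gcongr
        _ = ε / (240 * T ^ 3) := by field_simp
    calc deltaCT ε T * (3 / 2 * (1 + T ^ 2)) ≤ ε / (240 * T ^ 3) * (6 * T ^ 2) :=
          mul_le_mul hδ (by linarith) (by positivity) (by positivity)
      _ = ε / (40 * T) := by field_simp; ring
      _ ≤ ε := div_le_self hε (by linarith)

theorem deltaCT_mul_le {ε T g : ℝ} (hε : 0 ≤ ε) (hT : 0 < T) (hεT : ε ≤ T) (hg : 0 ≤ g) :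
    deltaCT ε T * (3 / 2 * (1 + g ^ 2 * T ^ 2)) ≤ ε * max 1 (g ^ 3) := by
  have hδ := deltaCT_nonneg hε hT.le
  calc deltaCT ε T * (3 / 2 * (1 + g ^ 2 * T ^ 2))
      ≤ deltaCT ε T * (3 / 2 * (max 1 (g ^ 3) + max 1 (g ^ 3) * T ^ 2)) := by
        gcongr
        · exact one_le_max_one_cube
        · exact sq_le_max_one_cube hg
    _ = deltaCT ε T * (3 / 2 * (1 + T ^ 2)) * max 1 (g ^ 3) := by ring
    _ ≤ ε * max 1 (g ^ 3) := by
        gcongr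
        exact deltaCT_mul_one_add_sq_le hε hT hεT

theorem deltaCT_mul_le_of_mul_le {ε T g e D : ℝ} (hε : 0 < ε) (hT : 0 < T) (hg : 0 ≤ g)
    (he : 0 ≤ e) (heT : ε * e ≤ T * e) (heD : ε * e ≤ 3 / 2 * (1 + g ^ 2 * T ^ 2) * D) :
    deltaCT ε T * e ≤ max 1 (g ^ 3) * D := by
  have hD : 0 ≤ D := nonneg_of_mul_nonneg_right ((mul_nonneg hε.le he).trans heD) (by positivity)
  rcases he.eq_or_lt with rfl | hpos
  · rw [mul_zero]
    positivity
  · refine le_of_mul_le_mul_left ?_ hε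
    have hδ := deltaCT_nonneg hε.le hT.le
    calc ε * (deltaCT ε T * e) = deltaCT ε T * (ε * e) := by ring
      _ ≤ deltaCT ε T * (3 / 2 * (1 + g ^ 2 * T ^ 2) * D) := by gcongr
      _ = deltaCT ε T * (3 / 2 * (1 + g ^ 2 * T ^ 2)) * D := by ring
      _ ≤ ε * max 1 (g ^ 3) * D := by
          have hεT := le_of_mul_le_mul_right heT hpos
          exact mul_le_mul_of_nonneg_right (deltaCT_mul_le hε.le hT hεT hg) hD
      _ = ε * (max 1 (g ^ 3) * D) := by ring

theorem le_one_sub_div_mul {δ σ m e v w : ℝ} (hδ : 0 ≤ δ) (hσ : 0 ≤ σ) (hm : 0 < m)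
    (he : 0 ≤ e) (hv : v ≤ σ * e) (hvw : δ * e ≤ m * (v - w)) :
    w ≤ (1 - δ / (σ * m)) * v := by
  have hloss : δ / (σ * m) * v ≤ v - w :=
    calc δ / (σ * m) * v ≤ δ / (σ * m) * (σ * e) := by gcongr
      _ = σ / σ * (δ * e / m) := by ring
      _ ≤ δ * e / m := mul_le_of_le_one_left (by positivity) (div_self_le_one σ)
      _ ≤ v - w := (div_le_iff₀' hm).2 hvw
  linarith

end Rate

section Excitation

variable {E : Type*} [NormedAddCommGroup E] [InnerProductSpace ℝ E] {A : ℝ → E →L[ℝ] E}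
  {ε T g σ : ℝ}

/-- Excitation of level `ε` on `[0, T]` by operators: a family of positive contractions whose
integral is at least `ε`. The integral is taken weakly, through quadratic forms, so no
measurability of `A` in operator norm is involved. -/
structure IsExciting (A : ℝ → E →L[ℝ] E) (ε T : ℝ) : Prop where
  isPositive : ∀ t ∈ Icc 0 T, (A t).IsPositive
  norm_le_one : ∀ t ∈ Icc 0 T, ‖A t‖ ≤ 1
  intervalIntegrable : ∀ v, IntervalIntegrable (fun t => ⟪v, A t v⟫) volume 0 T
  mul_sq_norm_le_integral : ∀ v, ε * ‖v‖ ^ 2 ≤ ∫ t in (0 : ℝ)..T, ⟪v, A t v⟫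

namespace IsExciting

theorem mul_sq_norm_le_mul_sq_norm (hA : IsExciting A ε T) (hT : 0 ≤ T) (v : E) :
    ε * ‖v‖ ^ 2 ≤ T * ‖v‖ ^ 2 :=
  calc ε * ‖v‖ ^ 2 ≤ ∫ t in (0 : ℝ)..T, ⟪v, A t v⟫ := hA.mul_sq_norm_le_integral v
    _ ≤ ∫ _ in (0 : ℝ)..T, 1 * ‖v‖ ^ 2 :=
        intervalIntegral.integral_mono_on hT (hA.intervalIntegrable v) intervalIntegrable_const
          fun t ht => inner_apply_self_le_mul_sq_norm (hA.norm_le_one t ht) v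
    _ = T * ‖v‖ ^ 2 := by simp

variable {z z' : ℝ → E} {U : ℝ → ℝ}

theorem antitoneOn (hA : IsExciting A ε T)
    (hU : ∀ t ∈ Icc 0 T, HasDerivWithinAt U (-⟪z t, A t (z t)⟫) (Icc 0 T) t) :
    AntitoneOn U (Icc 0 T) :=
  antitoneOn_of_hasDerivWithinAt_nonpos (convex_Icc 0 T)
    (fun t ht => (hU t ht).continuousWithinAt)
    (fun t ht => (hU t (interior_subset ht)).mono interior_subset)
    (fun t ht => neg_nonpos.2 ((hA.isPositive t (interior_subset ht)).inner_nonneg_right (z t)))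

theorem sq_norm_sub_le (hA : IsExciting A ε T)
    (hz : ∀ t ∈ Icc 0 T, HasDerivWithinAt z (z' t) (Icc 0 T) t)
    (hU : ∀ t ∈ Icc 0 T, HasDerivWithinAt U (-⟪z t, A t (z t)⟫) (Icc 0 T) t)
    (hspeed : ∀ t ∈ Icc 0 T, ‖z' t‖ ≤ g * ‖A t (z t)‖) {t : ℝ} (ht : t ∈ Icc 0 T) :
    ‖z t - z 0‖ ^ 2 ≤ g ^ 2 * t * (U 0 - U T) := by
  have hsub : Icc 0 t ⊆ Icc 0 T := Icc_subset_Icc_right ht.2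
  have hbound := sq_norm_sub_le_mul_sub ht.1 (fun s hs => (hz s (hsub hs)).mono hsub)
    (fun s hs => ((hU s (hsub hs)).const_mul (-g ^ 2)).mono hsub) fun s hs =>
      calc ‖z' s‖ ^ 2 ≤ (g * ‖A s (z s)‖) ^ 2 := by gcongr; exact hspeed s (hsub hs)
        _ = g ^ 2 * ‖A s (z s)‖ ^ 2 := mul_pow _ _ _
        _ ≤ g ^ 2 * ⟪z s, A s (z s)⟫ := by
            gcongr
            exact sq_norm_apply_le_inner (hA.isPositive s (hsub hs)) (hA.norm_le_one s (hsub hs)) _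
        _ = -g ^ 2 * -⟪z s, A s (z s)⟫ := by ring
  calc ‖z t - z 0‖ ^ 2 ≤ g ^ 2 * t * (U 0 - U t) := by linarith
    _ ≤ g ^ 2 * t * (U 0 - U T) := by
        have := ht.1
        gcongr
        exact hA.antitoneOn hU ht ⟨ht.1.trans ht.2, le_rfl⟩ ht.2

theorem mul_sq_norm_initial_le (hA : IsExciting A ε T) (hT : 0 ≤ T)
    (hz : ∀ t ∈ Icc 0 T, HasDerivWithinAt z (z' t) (Icc 0 T) t)
    (hU : ∀ t ∈ Icc 0 T, HasDerivWithinAt U (-⟪z t, A t (z t)⟫) (Icc 0 T) t)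
    (hspeed : ∀ t ∈ Icc 0 T, ‖z' t‖ ≤ g * ‖A t (z t)‖) :
    ε * ‖z 0‖ ^ 2 ≤ 3 / 2 * (1 + g ^ 2 * T ^ 2) * (U 0 - U T) := by
  have hprim (t) (ht : t ∈ Icc 0 T) : HasDerivWithinAt
      (fun s => -(3 / 2) * U s + 3 / 2 * g ^ 2 * (U 0 - U T) * s ^ 2)
      (3 / 2 * ⟪z t, A t (z t)⟫ + 3 * (g ^ 2 * t * (U 0 - U T))) (Icc 0 T) t := by
    refine (((hU t ht).const_mul (-(3 / 2))).add
      ((hasDerivAt_pow 2 t).hasDerivWithinAt.const_mul _)).congr_deriv ?_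
    push_cast
    ring
  have hint := intervalIntegral.integral_le_sub_of_hasDeriv_right_of_le hT
    (fun t ht => (hprim t ht).continuousWithinAt)
    (fun t ht => ((hprim t (Ioo_subset_Icc_self ht)).hasDerivAt
      (Icc_mem_nhds ht.1 ht.2)).hasDerivWithinAt)
    ((intervalIntegrable_iff_integrableOn_Icc_of_le hT).1 (hA.intervalIntegrable (z 0)))
    fun t ht => by
      have htI := Ioo_subset_Icc_self ht
      exact (inner_apply_self_le_add (hA.isPositive t htI) (hA.norm_le_one t htI) (z 0) (z t)).trans
        (by gcongr; exact hA.sq_norm_sub_le hz hU hspeed htI)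
  linarith [hA.mul_sq_norm_le_integral (z 0)]

variable [CompleteSpace E] {G P S : E →L[ℝ] E}

theorem inner_apply_le_of_apply_eq_zero (hA : IsExciting A ε T) (hε : 0 < ε) (hT : 0 < T)
    (hlyap : star (G - P) * S + S * (G - P) = -1)
    (hAG : ∀ t ∈ Icc 0 T, Commute (A t) G) (hAP : ∀ t ∈ Icc 0 T, Commute (A t) P)
    (hAS : ∀ t ∈ Icc 0 T, Commute (A t) S) (hg : ‖G‖ ≤ g) (hσ : ‖S‖ ≤ σ)
    (hz : ∀ t ∈ Icc 0 T, HasDerivWithinAt z (A t (G (z t))) (Icc 0 T) t)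
    (hPz : ∀ t ∈ Icc 0 T, P (z t) = 0) :
    ⟪z T, S (z T)⟫ ≤ (1 - deltaCT ε T / (σ * max 1 (g ^ 3))) * ⟪z 0, S (z 0)⟫ := by
  have hU (t) (ht : t ∈ Icc 0 T) : HasDerivWithinAt (fun s => ⟪z s, S (z s)⟫)
      (-⟪z t, A t (z t)⟫) (Icc 0 T) t := by
    have hG : G (z t) = (G - P) (z t) := by
      rw [_root_.sub_apply, hPz t ht, sub_zero]
    rw [← inner_apply_add_inner_apply_eq_neg hlyap (hA.isPositive t ht).isSelfAdjoint
      ((hAG t ht).sub_right (hAP t ht)) (hAS t ht), ← hG]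
    exact (hz t ht).inner ℝ (S.hasFDerivAt.comp_hasDerivWithinAt t (hz t ht))
  have hspeed (t) (ht : t ∈ Icc 0 T) : ‖A t (G (z t))‖ ≤ g * ‖A t (z t)‖ := by
    have hcomm : A t (G (z t)) = G (A t (z t)) := DFunLike.congr_fun (hAG t ht).eq (z t)
    rw [hcomm]
    exact G.le_of_opNorm_le hg _
  have hdecay := deltaCT_mul_le_of_mul_le hε hT ((norm_nonneg G).trans hg) (sq_nonneg ‖z 0‖)
    (hA.mul_sq_norm_le_mul_sq_norm hT.le (z 0)) (hA.mul_sq_norm_initial_le hT.le hz hU hspeed)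
  exact le_one_sub_div_mul (deltaCT_nonneg hε.le hT.le) ((norm_nonneg S).trans hσ)
    (one_pos.trans_le one_le_max_one_cube) (sq_nonneg ‖z 0‖)
    (inner_apply_self_le_mul_sq_norm hσ (z 0)) hdecay

theorem inner_sub_apply_le (hA : IsExciting A ε T) (hε : 0 < ε) (hT : 0 < T)
    (hGP : G * P = 0) (hPG : P * G = 0) (hP : IsIdempotentElem P)
    (hlyap : star (G - P) * S + S * (G - P) = -1)
    (hAG : ∀ t ∈ Icc 0 T, Commute (A t) G) (hAP : ∀ t ∈ Icc 0 T, Commute (A t) P)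
    (hAS : ∀ t ∈ Icc 0 T, Commute (A t) S) (hg : ‖G‖ ≤ g) (hσ : ‖S‖ ≤ σ)
    {x : ℝ → E} (hx : ∀ t ∈ Icc 0 T, HasDerivWithinAt x (A t (G (x t))) (Icc 0 T) t) :
    ⟪x T - P (x 0), S (x T - P (x 0))⟫ ≤
      (1 - deltaCT ε T / (σ * max 1 (g ^ 3))) * ⟪x 0 - P (x 0), S (x 0 - P (x 0))⟫ := by
  have hPx (t) (ht : t ∈ Icc 0 T) : P (x t) = P (x 0) := by
    refine eq_left_of_hasDerivWithinAt_zero (y := fun s => P (x s)) (fun s hs => ?_) ht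
    have hzero : P * (A s * G) = 0 := by
      rw [← mul_assoc, ← (hAP s hs).eq, mul_assoc, hPG, mul_zero]
    exact (P.hasFDerivAt.comp_hasDerivWithinAt s (hx s hs)).congr_deriv
      (DFunLike.congr_fun hzero (x s))
  refine hA.inner_apply_le_of_apply_eq_zero (z := fun t => x t - P (x 0)) hε hT hlyap hAG hAP hAS
    hg hσ (fun t ht => ((hx t ht).sub_const _).congr_deriv ?_) fun t ht => ?_
  · have hGPx : G (P (x 0)) = 0 := DFunLike.congr_fun hGP (x 0)
    rw [map_sub, hGPx, sub_zero]
  · have hPPx : P (P (x 0)) = P (x 0) := DFunLike.congr_fun hP.eq (x 0)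
    rw [map_sub, hPx t ht, hPPx, sub_self]

end IsExciting

end Excitation

section SpectralNorm

open scoped MatrixOrder Matrix.Norms.L2Operator

variable {m n : Type*} [Fintype m] [Fintype n]

theorem eunorm_eq_norm_toLp (v : n → ℝ) : eunorm v = ‖WithLp.toLp 2 v‖ := by
  simp [eunorm, EuclideanSpace.norm_eq]

theorem sigmaMin_le_norm_of_mulVec_eq {M : Matrix n n ℝ} {μ : ℝ} {v : n → ℝ} (hv : eunorm v = 1)
    (hMv : M *ᵥ v = μ • v) : sigmaMin M ≤ ‖μ‖ := by
  refine csInf_le ⟨0, ?_⟩ ⟨v, hv, ?_⟩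
  · rintro _ ⟨w, -, rfl⟩
    exact Real.sqrt_nonneg _
  · rw [eunorm_eq_norm_toLp] at hv ⊢
    rw [hMv, WithLp.toLp_smul, norm_smul, hv, mul_one]

theorem sigmaMin_mul_dotProduct_self_le {M : Matrix n n ℝ} (hM : M.PosSemidef) (v : n → ℝ) :
    sigmaMin M * (v ⬝ᵥ v) ≤ v ⬝ᵥ M *ᵥ v := by
  classical
  have heig (i : n) : sigmaMin M ≤ hM.1.eigenvalues i := by
    refine (sigmaMin_le_norm_of_mulVec_eq ?_ (hM.1.mulVec_eigenvectorBasis i)).trans_eq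
      (Real.norm_of_nonneg (hM.eigenvalues_nonneg i))
    rw [eunorm_eq_norm_toLp]
    exact hM.1.eigenvectorBasis.orthonormal.1 i
  have hle : (M - sigmaMin M • 1).PosSemidef := by
    rw [← Matrix.le_iff, ← Algebra.algebraMap_eq_smul_one,
      algebraMap_le_iff_le_spectrum, hM.1.spectrum_real_eq_range_eigenvalues]
    simpa only [mem_range, forall_exists_index, forall_apply_eq_imp_iff] using heig
  have hform := hle.dotProduct_mulVec_nonneg v
  rw [star_trivial, sub_mulVec, smul_mulVec, one_mulVec, dotProduct_sub, dotProduct_smul,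
    smul_eq_mul] at hform
  exact sub_nonneg.1 hform

variable [DecidableEq n]

theorem specNorm_eq_l2_opNorm (M : Matrix m n ℝ) : specNorm M = ‖M‖ := by
  rw [l2_opNorm_def, ← ContinuousLinearMap.sSup_unitClosedBall_eq_norm, specNorm]
  congr 1
  ext c
  simp only [eunorm_eq_norm_toLp, mem_ofPred_eq, mem_image, mem_closedBall_zero_iff]
  exact ⟨fun ⟨v, hv, hc⟩ => ⟨.toLp 2 v, hv, hc.symm⟩, fun ⟨v, hv, hc⟩ => ⟨v.ofLp, hv, hc.symm⟩⟩

theorem sigmaMax_eq_l2_opNorm (M : Matrix m n ℝ) : sigmaMax M = ‖M‖ := by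
  rw [l2_opNorm_def, ← ContinuousLinearMap.sSup_sphere_eq_norm, sigmaMax]
  congr 1
  ext c
  simp only [eunorm_eq_norm_toLp, mem_ofPred_eq, mem_image, mem_sphere_zero_iff_norm]
  exact ⟨fun ⟨v, hv, hc⟩ => ⟨.toLp 2 v, hv, hc.symm⟩, fun ⟨v, hv, hc⟩ => ⟨v.ofLp, hv, hc.symm⟩⟩

end SpectralNorm

section Kronecker

variable {l m n R : Type*} [Fintype m] [Fintype n] [DecidableEq n]

theorem kronecker_one_mulVec_apply [NonAssocSemiring R] (M : Matrix l m R) (w : m × n → R) (i : l)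
    (j : n) : ((M ⊗ₖ (1 : Matrix n n R)) *ᵥ w) (i, j) = (M *ᵥ fun k => w (k, j)) i := by
  simp [mulVec, dotProduct, Fintype.sum_prod_type, one_apply]

theorem one_kronecker_mulVec_apply [NonAssocSemiring R] (M : Matrix l m R) (w : n × m → R) (j : n)
    (i : l) : (((1 : Matrix n n R) ⊗ₖ M) *ᵥ w) (j, i) = (M *ᵥ fun k => w (j, k)) i := by
  simp [mulVec, dotProduct, Fintype.sum_prod_type, one_apply]

theorem mul_dotProduct_self_le_one_kronecker {M : Matrix m m ℝ} {c : ℝ}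
    (hM : ∀ v, c * (v ⬝ᵥ v) ≤ v ⬝ᵥ M *ᵥ v) (w : n × m → ℝ) :
    c * (w ⬝ᵥ w) ≤ w ⬝ᵥ ((1 : Matrix n n ℝ) ⊗ₖ M) *ᵥ w := by
  simp only [dotProduct, Fintype.sum_prod_type, one_kronecker_mulVec_apply] at hM ⊢
  rw [Finset.mul_sum]
  exact Finset.sum_le_sum fun j _ => hM fun k => w (j, k)

variable [Fintype l] [DecidableEq m] {𝕜 : Type*} [RCLike 𝕜]

open scoped Matrix.Norms.L2Operator

theorem l2_opNorm_le_iff_sum_sq_norm_mulVec_le {M : Matrix l m 𝕜} {c : ℝ} (hc : 0 ≤ c) :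
    ‖M‖ ≤ c ↔ ∀ v, ∑ i, ‖(M *ᵥ v) i‖ ^ 2 ≤ c ^ 2 * ∑ j, ‖v j‖ ^ 2 := by
  rw [l2_opNorm_def, ContinuousLinearMap.opNorm_le_iff hc,
    (WithLp.equiv 2 (m → 𝕜)).forall_congr_left]
  refine forall_congr' fun v => ?_
  rw [← pow_le_pow_iff_left₀ (norm_nonneg _) (by positivity) two_ne_zero, mul_pow,
    EuclideanSpace.norm_sq_eq, EuclideanSpace.norm_sq_eq]
  rfl

theorem l2_opNorm_kronecker_one_le (M : Matrix l m 𝕜) :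
    ‖M ⊗ₖ (1 : Matrix n n 𝕜)‖ ≤ ‖M‖ := by
  refine (l2_opNorm_le_iff_sum_sq_norm_mulVec_le (norm_nonneg M)).2 fun w => ?_
  simp only [Fintype.sum_prod_type_right, kronecker_one_mulVec_apply]
  rw [Finset.mul_sum]
  exact Finset.sum_le_sum fun j _ =>
    (l2_opNorm_le_iff_sum_sq_norm_mulVec_le (norm_nonneg M)).1 le_rfl fun k => w (k, j)

theorem l2_opNorm_one_kronecker_le (M : Matrix l m 𝕜) :
    ‖(1 : Matrix n n 𝕜) ⊗ₖ M‖ ≤ ‖M‖ := by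
  refine (l2_opNorm_le_iff_sum_sq_norm_mulVec_le (norm_nonneg M)).2 fun w => ?_
  simp only [Fintype.sum_prod_type, one_kronecker_mulVec_apply]
  rw [Finset.mul_sum]
  exact Finset.sum_le_sum fun j _ =>
    (l2_opNorm_le_iff_sum_sq_norm_mulVec_le (norm_nonneg M)).1 le_rfl fun k => w (j, k)

theorem commute_one_kronecker_kronecker_one [CommSemiring R] (M : Matrix m m R)
    (N : Matrix n n R) :
    Commute ((1 : Matrix m m R) ⊗ₖ N) (M ⊗ₖ (1 : Matrix n n R)) := by
  simp only [Commute, SemiconjBy, ← mul_kronecker_mul, one_mul, mul_one]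

end Kronecker

section QuadraticForm

variable {ι : Type*} [Fintype ι] {A : ℝ → Matrix ι ι ℝ} {a b : ℝ}

theorem intervalIntegrable_dotProduct_mulVec
    (hA : ∀ i j, IntervalIntegrable (fun t => A t i j) volume a b) (v w : ι → ℝ) :
    IntervalIntegrable (fun t => v ⬝ᵥ A t *ᵥ w) volume a b := by
  have hterm (i j : ι) : IntervalIntegrable (fun t => v i * A t i j * w j) volume a b :=
    ((hA i j).const_mul (v i)).mul_const (w j)
  simpa only [dotProduct, mulVec, Finset.mul_sum, ← mul_assoc, Finset.sum_fn] using
    IntervalIntegrable.sum .univ fun i _ => IntervalIntegrable.sum .univ fun j _ => hterm i j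

theorem integral_dotProduct_mulVec
    (hA : ∀ i j, IntervalIntegrable (fun t => A t i j) volume a b) (v w : ι → ℝ) :
    ∫ t in a..b, v ⬝ᵥ A t *ᵥ w = v ⬝ᵥ (Matrix.of fun i j => ∫ t in a..b, A t i j) *ᵥ w := by
  have hrow (i : ι) : IntervalIntegrable (fun t => ∑ j, A t i j * w j) volume a b := by
    simpa only [Finset.sum_fn] using
      IntervalIntegrable.sum .univ fun j _ => (hA i j).mul_const (w j)
  simp only [dotProduct, mulVec, of_apply]
  rw [intervalIntegral.integral_finsetSum fun i _ => (hrow i).const_mul (v i)]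
  refine Finset.sum_congr rfl fun i _ => ?_
  rw [intervalIntegral.integral_const_mul,
    intervalIntegral.integral_finsetSum fun j _ => (hA i j).mul_const (w j)]
  simp only [intervalIntegral.integral_mul_const]

theorem posSemidef_of_integral {ι : Type*} [Finite ι] {A : ℝ → Matrix ι ι ℝ} (hab : a ≤ b)
    (hA : ∀ t ∈ Icc a b, (A t).PosSemidef)
    (hAint : ∀ i j, IntervalIntegrable (fun t => A t i j) volume a b) :
    (Matrix.of fun i j => ∫ t in a..b, A t i j).PosSemidef := by
  cases nonempty_fintype ι
  refine .of_dotProduct_mulVec_nonneg (.ext fun i j => ?_) fun v => ?_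
  · refine intervalIntegral.integral_congr fun t ht => ?_
    rw [uIcc_of_le hab] at ht
    exact (hA t ht).1.apply i j
  · rw [star_trivial, ← integral_dotProduct_mulVec hAint]
    exact intervalIntegral.integral_nonneg hab fun t ht => (hA t ht).dotProduct_mulVec_nonneg v

end QuadraticForm

section KroneckerOperator

open scoped ComplexOrder Matrix.Norms.L2Operator

variable {ι κ : Type*} [Fintype ι] [DecidableEq ι] [Fintype κ] [DecidableEq κ]
  {Q : ℝ → Matrix κ κ ℝ} {ε T : ℝ}

theorem isPositive_toEuclideanCLM_iff {𝕜 : Type*} [RCLike 𝕜] {M : Matrix ι ι 𝕜} :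
    (toEuclideanCLM (𝕜 := 𝕜) M).IsPositive ↔ M.PosSemidef := by
  rw [← ContinuousLinearMap.isPositive_toLinearMap_iff, coe_toEuclideanCLM_eq_toEuclideanLin,
    isPositive_toEuclideanLin_iff]

variable (κ) in
/-- The operator `M ⊗ I` on Euclidean space, as a star algebra homomorphism in `M`; it transfers the
algebraic identities between `Γ`, `1 rᵀ` and `Ω` to operators. -/
def kroneckerOneCLM : Matrix ι ι ℝ →⋆ₐ[ℝ]
    EuclideanSpace ℝ (ι × κ) →L[ℝ] EuclideanSpace ℝ (ι × κ) where
  toFun M := toEuclideanCLM (𝕜 := ℝ) (M ⊗ₖ (1 : Matrix κ κ ℝ))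
  map_one' := by rw [one_kronecker_one, map_one]
  map_mul' M N := by rw [← map_mul, ← mul_kronecker_mul, mul_one]
  map_zero' := by rw [zero_kronecker, map_zero]
  map_add' M N := by rw [add_kronecker, map_add]
  commutes' c := by
    rw [Algebra.algebraMap_eq_smul_one, smul_kronecker, one_kronecker_one, map_smul, map_one,
      Algebra.algebraMap_eq_smul_one]
  map_star' M := by
    rw [← map_star, star_eq_conjTranspose, star_eq_conjTranspose, conjTranspose_kronecker,
      conjTranspose_one]

theorem kroneckerOneCLM_toLp (M : Matrix ι ι ℝ) (v : ι × κ → ℝ) :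
    kroneckerOneCLM κ M (WithLp.toLp 2 v) = WithLp.toLp 2 ((M ⊗ₖ (1 : Matrix κ κ ℝ)) *ᵥ v) :=
  toEuclideanCLM_toLp _ _

theorem inner_kroneckerOneCLM_toLp (M : Matrix ι ι ℝ) (v w : ι × κ → ℝ) :
    ⟪WithLp.toLp 2 v, kroneckerOneCLM κ M (WithLp.toLp 2 w)⟫ =
      v ⬝ᵥ (M ⊗ₖ (1 : Matrix κ κ ℝ)) *ᵥ w :=
  inner_toEuclideanCLM _ _ _

theorem norm_kroneckerOneCLM_le (M : Matrix ι ι ℝ) : ‖kroneckerOneCLM κ M‖ ≤ ‖M‖ :=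
  (l2_opNorm_toEuclideanCLM _).trans_le (l2_opNorm_kronecker_one_le M)

theorem commute_one_kronecker_kroneckerOneCLM (M : Matrix ι ι ℝ) (N : Matrix κ κ ℝ) :
    Commute (toEuclideanCLM (𝕜 := ℝ) ((1 : Matrix ι ι ℝ) ⊗ₖ N)) (kroneckerOneCLM κ M) :=
  (commute_one_kronecker_kronecker_one M N).map toEuclideanCLM

theorem isExciting_one_kronecker (hT : 0 ≤ T) (hQ : ∀ t ∈ Icc 0 T, (Q t).PosSemidef)
    (hQ1 : ∀ t ∈ Icc 0 T, specNorm (Q t) ≤ 1)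
    (hQint : ∀ a b, IntervalIntegrable (fun t => Q t a b) volume 0 T)
    (hQε : ε ≤ sigmaMin (Matrix.of fun a b => ∫ t in (0 : ℝ)..T, Q t a b)) :
    IsExciting (fun t => toEuclideanCLM (𝕜 := ℝ) ((1 : Matrix ι ι ℝ) ⊗ₖ Q t)) ε T := by
  have hint (i j : ι × κ) :
      IntervalIntegrable (fun t => ((1 : Matrix ι ι ℝ) ⊗ₖ Q t) i j) volume 0 T :=
    (hQint i.2 j.2).const_mul _
  have hintegral : (Matrix.of fun i j => ∫ t in (0 : ℝ)..T, ((1 : Matrix ι ι ℝ) ⊗ₖ Q t) i j) =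
      1 ⊗ₖ Matrix.of fun a b => ∫ t in (0 : ℝ)..T, Q t a b := by
    ext i j
    exact intervalIntegral.integral_const_mul _ _
  refine ⟨fun t ht => isPositive_toEuclideanCLM_iff.2 (.kronecker .one (hQ t ht)), fun t ht => ?_,
    fun v => ?_, fun v => ?_⟩
  · rw [l2_opNorm_toEuclideanCLM]
    exact (l2_opNorm_one_kronecker_le _).trans (specNorm_eq_l2_opNorm (Q t) ▸ hQ1 t ht)
  · simpa only [inner_toEuclideanCLM] using intervalIntegrable_dotProduct_mulVec hint _ _
  · simp only [inner_toEuclideanCLM]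
    rw [integral_dotProduct_mulVec hint, hintegral, ← real_inner_self_eq_norm_sq,
      EuclideanSpace.inner_eq_star_dotProduct, star_trivial]
    refine mul_dotProduct_self_le_one_kronecker (fun w => ?_) _
    exact (mul_le_mul_of_nonneg_right hQε (dotProduct_self_star_nonneg w)).trans
      (sigmaMin_mul_dotProduct_self_le (posSemidef_of_integral hT hQ hQint) w)

theorem stmt4_general (hε : 0 < ε) (hT : 0 < T) {Γ P Ω : Matrix ι ι ℝ} (hΓP : Γ * P = 0)
    (hPΓ : P * Γ = 0) (hP : IsIdempotentElem P) (hlyap : (Γ - P)ᵀ * Ω + Ω * (Γ - P) = -1)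
    (hQ : ∀ t ∈ Icc 0 T, (Q t).PosSemidef) (hQ1 : ∀ t ∈ Icc 0 T, specNorm (Q t) ≤ 1)
    (hQint : ∀ a b, IntervalIntegrable (fun t => Q t a b) volume 0 T)
    (hQε : ε ≤ sigmaMin (Matrix.of fun a b => ∫ t in (0 : ℝ)..T, Q t a b))
    {x : ℝ → ι × κ → ℝ}
    (hx : ∀ t ∈ Icc 0 T, HasDerivWithinAt x ((Γ ⊗ₖ Q t) *ᵥ x t) (Icc 0 T) t)
    {xbar : ι × κ → ℝ} (hxbar : xbar = (P ⊗ₖ (1 : Matrix κ κ ℝ)) *ᵥ x 0) :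
    (x T - xbar) ⬝ᵥ (Ω ⊗ₖ (1 : Matrix κ κ ℝ)) *ᵥ (x T - xbar) ≤
      (1 - deltaCT ε T / (sigmaMax Ω * max 1 (specNorm Γ ^ 3))) *
        ((x 0 - xbar) ⬝ᵥ (Ω ⊗ₖ (1 : Matrix κ κ ℝ)) *ᵥ (x 0 - xbar)) := by
  have hexc := isExciting_one_kronecker (ι := ι) hT.le hQ hQ1 hQint hQε
  have hX (t) (ht : t ∈ Icc 0 T) : HasDerivWithinAt (fun s => WithLp.toLp 2 (x s))
      (toEuclideanCLM (𝕜 := ℝ) ((1 : Matrix ι ι ℝ) ⊗ₖ Q t)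
        (kroneckerOneCLM κ Γ (WithLp.toLp 2 (x t)))) (Icc 0 T) t := by
    rw [kroneckerOneCLM_toLp, toEuclideanCLM_toLp, mulVec_mulVec, ← mul_kronecker_mul, one_mul,
      mul_one]
    exact (PiLp.hasFDerivAt_toLp 2 (x t)).comp_hasDerivWithinAt t (hx t ht)
  have hcontr := hexc.inner_sub_apply_le (G := kroneckerOneCLM κ Γ) (P := kroneckerOneCLM κ P)
    (S := kroneckerOneCLM κ Ω) hε hT (by rw [← map_mul, hΓP, map_zero])
    (by rw [← map_mul, hPΓ, map_zero]) (hP.map _)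
    (by
      rw [← map_sub, ← map_star, ← map_mul, ← map_mul, ← map_add, star_eq_conjTranspose,
        conjTranspose_eq_transpose_of_trivial, hlyap, map_neg, map_one])
    (fun t _ => commute_one_kronecker_kroneckerOneCLM Γ (Q t))
    (fun t _ => commute_one_kronecker_kroneckerOneCLM P (Q t))
    (fun t _ => commute_one_kronecker_kroneckerOneCLM Ω (Q t))
    (norm_kroneckerOneCLM_le Γ) (norm_kroneckerOneCLM_le Ω) hX
  rw [sigmaMax_eq_l2_opNorm, specNorm_eq_l2_opNorm]
  rwa [kroneckerOneCLM_toLp, ← hxbar, ← WithLp.toLp_sub, ← WithLp.toLp_sub,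
    inner_kroneckerOneCLM_toLp, inner_kroneckerOneCLM_toLp] at hcontr

end KroneckerOperator

theorem IsInterconnection.mulVec_one {p : ℕ} {Γ : Matrix (Fin p) (Fin p) ℝ}
    (hΓ : IsInterconnection Γ) : (Γ *ᵥ fun _ => 1) = 0 := by
  ext i
  have hdiag := hΓ.2 i
  rw [Finset.filter_ne'] at hdiag
  simp only [mulVec, dotProduct, mul_one, Pi.zero_apply]
  rw [← Finset.add_sum_erase _ _ (Finset.mem_univ i), hdiag, neg_add_cancel]

theorem isIdempotentElem_vecMulVec {ι R : Type*} [Fintype ι] [Semiring R] {v w : ι → R}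
    (h : w ⬝ᵥ v = 1) : IsIdempotentElem (vecMulVec v w) := by
  rw [IsIdempotentElem, vecMulVec_mul_vecMulVec, h, one_smul]

theorem stmt4 {p n : ℕ} (ε T : ℝ) (hε : 0 < ε) (hT : 0 < T)
    (Γ : Matrix (Fin p) (Fin p) ℝ)
    (hΓ : IsInterconnection Γ) (hconn : ConnectedMat Γ)
    (r : Fin p → ℝ) (hr1 : Matrix.vecMul r Γ = 0) (hr2 : ∑ i, r i = 1)
    (Ω : Matrix (Fin p) (Fin p) ℝ) (hΩs : Ω.IsSymm) (hΩpd : Ω.PosDef)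
    (hlyap : (Γ - vecMulVec (fun _ => (1 : ℝ)) r)ᵀ * Ω
        + Ω * (Γ - vecMulVec (fun _ => (1 : ℝ)) r) = -1)
    (V : ((Fin p × Fin n) → ℝ) → ℝ)
    (hV : ∀ z, V z = z ⬝ᵥ ((Ω ⊗ₖ (1 : Matrix (Fin n) (Fin n) ℝ)).mulVec z))
    (Q : ℝ → Matrix (Fin n) (Fin n) ℝ)
    (hQ : ∀ t : ℝ, 0 ≤ t → InQbar (Q t))
    (hQint : ∀ a b : Fin n, ∀ s u : ℝ, IntervalIntegrable (fun t => Q t a b) volume s u)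
    (hQε : ε ≤ sigmaMin (Matrix.of fun a b => ∫ t in (0 : ℝ)..T, Q t a b))
    (x : ℝ → (Fin p × Fin n) → ℝ)
    (hx : ∀ t : ℝ, 0 ≤ t → ∀ i, HasDerivAt (fun s => x s i) (((Γ ⊗ₖ Q t).mulVec (x t)) i) t)
    (xbar : (Fin p × Fin n) → ℝ)
    (hxbar : xbar = ((vecMulVec (fun _ => (1 : ℝ)) r) ⊗ₖ (1 : Matrix (Fin n) (Fin n) ℝ)).mulVec (x 0)) :
    V (x T - xbar)
      ≤ (1 - deltaCT ε T / (sigmaMax Ω * max 1 (specNorm Γ ^ 3))) * V (x 0 - xbar) := by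
  simp only [hV]
  exact stmt4_general hε hT (by rw [mul_vecMulVec, hΓ.mulVec_one, zero_vecMulVec])
    (by rw [vecMulVec_mul, hr1, vecMulVec_zero])
    (isIdempotentElem_vecMulVec (by simpa only [dotProduct, mul_one] using hr2)) hlyap
    (fun t ht => (hQ t ht.1).1) (fun t ht => (hQ t ht.1).2) (fun a b => hQint a b 0 T) hQε
    (fun t ht => (hasDerivAt_pi.2 (hx t ht.1)).hasDerivWithinAt) hxbar
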